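/- Let d* > d_s > 0 be real numbers, set a = (d*)² − d_s², and let α > 0; let H(e) = (α/4)·(1/(e + a) − 1/a)² be the barrier potential, defined for e ≠ −a. Let e : [0, ∞) → ℝ be continuous with e(0) > −a, and suppose that for every t ≥ 0 the following holds: if e(s) > −a for all s ∈ [0, t], then H(e(t)) ≤ H(e(0)). Then e(t) > −a for all t ≥ 0; moreover there exists δ > 0 such that e(t) ≥ −a + δ for all t ≥ 0. In particular, if q : [0, ∞) → ℝⁿ is continuous and e(t) = ‖q(t)‖² − (d*)², then ‖q(t)‖ > d_s for all t ≥ 0 (no collision occurs). -/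

import Mathlib

/-- Barrier certificate / safety invariance: if `e : [0,∞) → ℝ` is continuous with
`e 0 > −a`, and the barrier potential `H(e) = (α/4)(1/(e+a) − 1/a)²` (with
`a = (d*)² − d_s² > 0`) is nonincreasing along the trajectory as long as it has
stayed above `−a`, then `e(t) > −a` for all `t ≥ 0`; moreover `e` stays uniformly
away from `−a`. In particular, if `e(t) = ‖q(t)‖² − (d*)²` for a continuous
`q : [0,∞) → ℝⁿ`, then `‖q(t)‖ > d_s` for all `t ≥ 0`: no collision occurs. -/
theorem barrier_safety_invariance
    (dstar ds α : ℝ) (hds : 0 < ds) (hd : ds < dstar) (hα : 0 < α)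
    (a : ℝ) (ha : a = dstar ^ 2 - ds ^ 2)
    (H : ℝ → ℝ) (hH : ∀ e, H e = α / 4 * (1 / (e + a) - 1 / a) ^ 2)
    (e : ℝ → ℝ) (hecont : ContinuousOn e (Set.Ici 0))
    (h0 : e 0 > -a)
    (hdecay : ∀ t ≥ (0 : ℝ), (∀ s ∈ Set.Icc (0 : ℝ) t, e s > -a) → H (e t) ≤ H (e 0)) :
    (∀ t ≥ (0 : ℝ), e t > -a) ∧
    (∃ δ > (0 : ℝ), ∀ t ≥ (0 : ℝ), e t ≥ -a + δ) ∧
    (∀ (n : ℕ) (q : ℝ → EuclideanSpace ℝ (Fin n)),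
      ContinuousOn q (Set.Ici 0) →
      (∀ t ≥ (0 : ℝ), e t = ‖q t‖ ^ 2 - dstar ^ 2) →
      ∀ t ≥ (0 : ℝ), ‖q t‖ > ds) := by
  have hapos : 0 < a := by rw [ha]; nlinarith
  -- uniform lower bound as long as the trajectory has stayed safe
  obtain ⟨δ, hδ, key⟩ : ∃ δ > (0 : ℝ), ∀ t ≥ (0 : ℝ),
      (∀ s ∈ Set.Icc (0 : ℝ) t, e s > -a) → e t ≥ -a + δ := by
    have hM : 0 < |1 / (e 0 + a) - 1 / a| + 1 / a := by positivity
    refine ⟨1 / (|1 / (e 0 + a) - 1 / a| + 1 / a), by positivity, ?_⟩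
    intro t ht hs
    have h1 := hdecay t ht hs
    rw [hH, hH] at h1
    have h2 := le_of_mul_le_mul_left h1 (by positivity)
    have h3 := sq_le_sq.mp h2
    have h4 := le_abs_self (1 / (e t + a) - 1 / a)
    have h5 : 0 < e t + a := by linarith [hs t ⟨ht, le_refl t⟩]
    have h6 : 1 / (e t + a) ≤ |1 / (e 0 + a) - 1 / a| + 1 / a := by linarith
    have h7 := (one_div_le h5 hM).mp h6
    linarith
  have main : ∀ t ≥ (0 : ℝ), e t > -a := by
    intro t ht
    by_contra hneg
    have hcont : ContinuousOn e (Set.Icc 0 t) := hecont.mono Set.Icc_subset_Ici_self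
    have hcl : IsCompact (Set.Icc 0 t ∩ e ⁻¹' Set.Iic (-a)) :=
      isCompact_Icc.of_isClosed_subset
        (hcont.preimage_isClosed_of_isClosed isClosed_Icc isClosed_Iic) Set.inter_subset_left
    obtain ⟨T, ⟨hT, hTa⟩, hmin⟩ := hcl.exists_isLeast ⟨t, ⟨ht, le_refl t⟩, not_lt.mp hneg⟩
    have hTa' : e T ≤ -a := hTa
    have he0 : e 0 ≥ -a + δ := key 0 le_rfl (by
      intro s hs
      have : s = 0 := le_antisymm hs.2 hs.1
      rw [this]; exact h0)
    obtain ⟨s, hs, hse⟩ := intermediate_value_Icc' hT.1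
      (hecont.mono (Set.Icc_subset_Ici_self : Set.Icc 0 T ⊆ Set.Ici 0))
      (show -a + δ / 2 ∈ Set.Icc (e T) (e 0) from ⟨by linarith, by linarith⟩)
    have hsT : s < T := by
      refine lt_of_le_of_ne hs.2 ?_
      rintro rfl
      linarith
    have := key s hs.1 (by
      intro r hr
      by_contra hc
      have : T ≤ r := hmin ⟨⟨hr.1, by linarith [hr.2, hT.2]⟩, not_lt.mp hc⟩
      linarith [hr.2])
    linarith
  refine ⟨main, ⟨δ, hδ, fun t ht => key t ht fun s hs => main s hs.1⟩, ?_⟩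
  intro n q _ hq t ht
  have h1 := main t ht
  rw [hq t ht] at h1
  refine lt_of_pow_lt_pow_left₀ 2 (norm_nonneg _) ?_
  linarith
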